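/- Let α ≥ 0 and let h₀ = ℝ·(x² + z² + α(2y − xz)) ⊆ L₀. Then the first prolongation of h₀ vanishes: {u ∈ L₁ : {u, x} ∈ h₀ and {u, z} ∈ h₀} = {0}. -/

import Mathlib

noncomputable section

open MvPolynomial

/-- The polynomial algebra `L = ℝ[x, y, z]`, with `x = X 0`, `y = X 1`, `z = X 2`. -/
abbrev PL : Type := MvPolynomial (Fin 3) ℝ

/-- The Lagrange bracket
`{f,g} = f_x g_z − f_z g_x + z (f_y g_z − f_z g_y) + f g_y − g f_y` on `L`. -/
noncomputable def lagr (f g : PL) : PL :=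
  pderiv 0 f * pderiv 2 g - pderiv 2 f * pderiv 0 g
    + X 2 * (pderiv 1 f * pderiv 2 g - pderiv 2 f * pderiv 1 g)
    + f * pderiv 1 g - g * pderiv 1 f

/-- `L_p`: the span of the monomials of total weight `p + 2`, where the variables
`x, y, z` have weights `1, 2, 1` respectively. -/
def Lgrade (p : ℤ) : Submodule ℝ PL where
  carrier := {f | ∀ m ∈ f.support, (m 0 : ℤ) + 2 * m 1 + m 2 = p + 2}
  add_mem' := fun {f g} hf hg m hm => by
    rcases Finset.mem_union.mp (MvPolynomial.support_add hm) with hh | hh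
    · exact hf m hh
    · exact hg m hh
  zero_mem' := by
    intro m hm
    simp [MvPolynomial.support_zero] at hm
  smul_mem' := fun c f hf m hm => hf m (MvPolynomial.support_smul hm)

/-- `L₁ = span{x³, x²z, xz², z³, x(2y−xz), z(2y−xz)}`. -/
noncomputable def L1span : Submodule ℝ PL :=
  Submodule.span ℝ
    {X 0 ^ 3, X 0 ^ 2 * X 2, X 0 * X 2 ^ 2, X 2 ^ 3,
      X 0 * (2 * X 1 - X 0 * X 2), X 2 * (2 * X 1 - X 0 * X 2)}

/-!
If `{u,x} = l q` and `{u,z} = k q`, then `{x,z} = 1` and the Jacobi identity give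
`{u,1} = l {q,z} - k {q,x}`. Since `1` commutes with `x` and `z`, bracketing this with `x` and
with `z` must yield `l {q,1}` and `k {q,1}`: a homogeneous linear system for `(l, k)` depending
only on `q`. For `q = a x² + b xz + c z² + α (2y - xz)` its determinant is `9α² - (b² - 4ac)`, which
is `9α² + 4` for the element in question. So `u` centralizes `x` and `z`, which forces it to be
constant, and no nonzero element of `L₁` is constant.
-/

theorem pderiv_pderiv_X {σ R : Type*} [CommSemiring R] (i j k : σ) :
    pderiv i (pderiv j (X k : MvPolynomial σ R)) = 0 := by
  classical
  rw [pderiv_X, Pi.single_apply, apply_ite (pderiv i), pderiv_one, map_zero, ite_self]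

theorem pderiv_pderiv_comm {σ R : Type*} [CommRing R] (i j : σ) (f : MvPolynomial σ R) :
    pderiv i (pderiv j f) = pderiv j (pderiv i f) := by
  have commutator_eq_zero : ⁅pderiv (R := R) i, pderiv j⁆ = 0 :=
    derivation_ext fun k => by
      rw [Derivation.commutator_apply, pderiv_pderiv_X, pderiv_pderiv_X, sub_self,
        Derivation.zero_apply]
  rw [← sub_eq_zero, ← Derivation.commutator_apply, commutator_eq_zero, Derivation.zero_apply]

theorem pderiv_ofNat {σ R : Type*} [CommSemiring R] (i : σ) (n : ℕ) [n.AtLeastTwo] :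
    pderiv i (ofNat(n) : MvPolynomial σ R) = 0 :=
  (pderiv i).map_natCast n

theorem eq_zero_of_forall_pderiv_eq_zero {σ R : Type*} [CommRing R] [IsAddTorsionFree R]
    {f : MvPolynomial σ R} (hf : ∀ i, pderiv i f = 0) (hf₀ : constantCoeff f = 0) : f = 0 := by
  refine coe_injective σ R (MvPowerSeries.pderiv.ext (fun i => ?_) ?_)
  · simp [MvPowerSeries.pderiv_coe, hf i]
  · simpa [← MvPowerSeries.coeff_zero_eq_constantCoeff, constantCoeff_eq] using hf₀

section LagrangeBracket

variable (f g h : PL)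

theorem lagr_X_zero_right : lagr f (X 0) = -pderiv 2 f - X 0 * pderiv 1 f := by
  simp [lagr, sub_eq_add_neg]

theorem lagr_X_two_right : lagr f (X 2) = pderiv 0 f := by
  simp only [lagr, ne_eq, Fin.reduceEq, not_false_eq_true, pderiv_X_of_ne, pderiv_X_self]
  ring

theorem lagr_one_right : lagr f 1 = -pderiv 1 f := by
  simp [lagr]

theorem lagr_zero_right : lagr f 0 = 0 := by
  simp [lagr]

theorem lagr_zero_left : lagr 0 f = 0 := by
  simp [lagr]

theorem lagr_sub_left : lagr (f - g) h = lagr f h - lagr g h := by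
  simp only [lagr, map_sub]
  ring

theorem lagr_smul_left (r : ℝ) : lagr (r • f) g = r • lagr f g := by
  simp only [lagr, smul_eq_C_mul, pderiv_C_mul]
  ring

theorem lagr_jacobi : lagr f (lagr g h) = lagr (lagr f g) h - lagr (lagr f h) g := by
  simp only [lagr, map_add, map_sub, pderiv_mul, pderiv_X_self, ne_eq, Fin.reduceEq,
    not_false_eq_true, pderiv_X_of_ne, pderiv_pderiv_comm (1 : Fin 3) 0,
    pderiv_pderiv_comm (2 : Fin 3) 0, pderiv_pderiv_comm (2 : Fin 3) 1]
  ring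

theorem lagr_X_zero_X_two : lagr (X 0) (X 2) = 1 := by
  simp [lagr_X_two_right]

theorem lagr_one_X_zero : lagr 1 (X 0) = 0 := by
  simp [lagr_X_zero_right]

theorem lagr_one_X_two : lagr 1 (X 2) = 0 := by
  simp [lagr_X_two_right]

theorem lagr_one_right_eq_sub :
    lagr f 1 = lagr (lagr f (X 0)) (X 2) - lagr (lagr f (X 2)) (X 0) := by
  rw [← lagr_jacobi, lagr_X_zero_X_two]

variable {g} in
theorem lagr_right_comm (hg : lagr 1 g = 0) : lagr (lagr f 1) g = lagr (lagr f g) 1 := by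
  rw [← sub_eq_zero, ← lagr_jacobi, hg, lagr_zero_right]

variable {f} in
theorem eq_zero_of_lagr_X_eq_zero (hx : lagr f (X 0) = 0) (hz : lagr f (X 2) = 0)
    (hf₀ : constantCoeff f = 0) : f = 0 := by
  have lagr_one_eq_zero : lagr f 1 = 0 := by
    rw [lagr_one_right_eq_sub, hx, hz, lagr_zero_left, lagr_zero_left, sub_zero]
  have hf_x : pderiv 0 f = 0 := by rwa [← lagr_X_two_right]
  have hf_y : pderiv 1 f = 0 := by rwa [← neg_eq_zero, ← lagr_one_right]
  have hf_z : pderiv 2 f = 0 := by simpa [lagr_X_zero_right, hf_y] using hx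
  exact eq_zero_of_forall_pderiv_eq_zero (by simp [Fin.forall_fin_succ, hf_x, hf_y, hf_z]) hf₀

end LagrangeBracket

/-- The matrix of the homogeneous linear system that the Jacobi identity imposes on `(l, k)` when
`{u,x} = l q` and `{u,z} = k q` for some `u`. If its determinant is nonzero, the first prolongation
of `ℝ q` vanishes. -/
def prolongMatrix (q : PL) : Matrix (Fin 2) (Fin 2) PL :=
  !![lagr (lagr q (X 2)) (X 0) - lagr q 1, -lagr (lagr q (X 0)) (X 0);
    lagr (lagr q (X 2)) (X 2), -lagr (lagr q (X 0)) (X 2) - lagr q 1]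

theorem prolongMatrix_mulVec_eq_zero {u q : PL} {l k : ℝ} (hx : lagr u (X 0) = l • q)
    (hz : lagr u (X 2) = k • q) : (prolongMatrix q).mulVec ![C l, C k] = 0 := by
  have hu_one : lagr u 1 = l • lagr q (X 2) - k • lagr q (X 0) := by
    rw [lagr_one_right_eq_sub, hx, hz, lagr_smul_left, lagr_smul_left]
  have bracket_x : l • lagr (lagr q (X 2)) (X 0) - k • lagr (lagr q (X 0)) (X 0)
      = l • lagr q 1 := by
    simpa only [hu_one, hx, lagr_sub_left, lagr_smul_left] using lagr_right_comm u lagr_one_X_zero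
  have bracket_z : l • lagr (lagr q (X 2)) (X 2) - k • lagr (lagr q (X 0)) (X 2)
      = k • lagr q 1 := by
    simpa only [hu_one, hz, lagr_sub_left, lagr_smul_left] using lagr_right_comm u lagr_one_X_two
  simp only [smul_eq_C_mul] at bracket_x bracket_z
  simp only [prolongMatrix, Matrix.mulVec_fin_two, Matrix.of_apply, Matrix.cons_val,
    Matrix.cons_eq_zero_iff]
  refine ⟨?_, ?_, Subsingleton.elim _ _⟩
  · linear_combination bracket_x
  · linear_combination bracket_z

section WeightTwo

/-- The general element of `L₀`, whose monomials have weight two. In the coordinates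
`(a, b, c, α)` the generator of `h₀` is `(1, 0, 1, α)`. -/
def weightTwo (a b c α : ℝ) : PL :=
  C a * X 0 ^ 2 + C b * (X 0 * X 2) + C c * X 2 ^ 2 + C α * (2 * X 1 - X 0 * X 2)

variable (a b c α : ℝ)

theorem pderiv_zero_weightTwo :
    pderiv 0 (weightTwo a b c α) = C (2 * a) * X 0 + C (b - α) * X 2 := by
  simp only [weightTwo, map_add, map_sub, map_mul, map_ofNat, pderiv_mul, pderiv_pow, pderiv_C,
    pderiv_ofNat, pderiv_X_self, ne_eq, Fin.reduceEq, not_false_eq_true, pderiv_X_of_ne]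
  ring

theorem pderiv_one_weightTwo : pderiv 1 (weightTwo a b c α) = C (2 * α) := by
  simp only [weightTwo, map_add, map_sub, map_mul, map_ofNat, pderiv_mul, pderiv_pow, pderiv_C,
    pderiv_ofNat, pderiv_X_self, ne_eq, Fin.reduceEq, not_false_eq_true, pderiv_X_of_ne]
  ring

theorem pderiv_two_weightTwo :
    pderiv 2 (weightTwo a b c α) = C (b - α) * X 0 + C (2 * c) * X 2 := by
  simp only [weightTwo, map_add, map_sub, map_mul, map_ofNat, pderiv_mul, pderiv_pow, pderiv_C,
    pderiv_ofNat, pderiv_X_self, ne_eq, Fin.reduceEq, not_false_eq_true, pderiv_X_of_ne]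
  ring

theorem lagr_weightTwo_X_zero :
    lagr (weightTwo a b c α) (X 0) = C (-(b + α)) * X 0 + C (-(2 * c)) * X 2 := by
  rw [lagr_X_zero_right, pderiv_one_weightTwo, pderiv_two_weightTwo]
  simp only [map_neg, map_add, map_sub, map_mul, map_ofNat]
  ring

theorem lagr_weightTwo_X_two :
    lagr (weightTwo a b c α) (X 2) = C (2 * a) * X 0 + C (b - α) * X 2 := by
  rw [lagr_X_two_right, pderiv_zero_weightTwo]

theorem lagr_linear_X_zero : lagr (C a * X 0 + C b * X 2) (X 0) = -C b := by
  simp [lagr_X_zero_right]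

theorem lagr_linear_X_two : lagr (C a * X 0 + C b * X 2) (X 2) = C a := by
  simp [lagr_X_two_right]

theorem prolongMatrix_weightTwo :
    prolongMatrix (weightTwo a b c α) =
      !![C (3 * α - b), C (-(2 * c)); C (2 * a), C (3 * α + b)] := by
  simp only [prolongMatrix, lagr_weightTwo_X_zero, lagr_weightTwo_X_two, lagr_linear_X_zero,
    lagr_linear_X_two, lagr_one_right, pderiv_one_weightTwo, ← map_neg, ← map_sub]
  ring_nf

theorem det_prolongMatrix_weightTwo :
    (prolongMatrix (weightTwo a b c α)).det = C (9 * α ^ 2 - discrim a b c) := by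
  rw [prolongMatrix_weightTwo, Matrix.det_fin_two_of, discrim, ← map_mul, ← map_mul, ← map_sub]
  ring_nf

theorem det_prolongMatrix_generator_ne_zero :
    (prolongMatrix (X 0 ^ 2 + X 2 ^ 2 + C α * (2 * X 1 - X 0 * X 2))).det ≠ 0 := by
  have generator_eq : X 0 ^ 2 + X 2 ^ 2 + C α * (2 * X 1 - X 0 * X 2) = weightTwo 1 0 1 α := by
    simp [weightTwo]
  have det_pos : 0 < 9 * α ^ 2 - discrim 1 0 1 := by
    rw [discrim]
    nlinarith [sq_nonneg α]
  rw [generator_eq, det_prolongMatrix_weightTwo, C_ne_zero]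
  exact det_pos.ne'

end WeightTwo

theorem constantCoeff_eq_zero_of_mem_L1span {u : PL} (hu : u ∈ L1span) : constantCoeff u = 0 := by
  suffices L1span ≤ (RingHom.ker (constantCoeff (σ := Fin 3) (R := ℝ))).restrictScalars ℝ from
    this hu
  simp [L1span, Submodule.span_le, Set.insert_subset_iff]

theorem stmt13_general {q : PL} (hq : (prolongMatrix q).det ≠ 0) {u : PL}
    (hu : constantCoeff u = 0) (hx : lagr u (X 0) ∈ Submodule.span ℝ {q})
    (hz : lagr u (X 2) ∈ Submodule.span ℝ {q}) : u = 0 := by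
  obtain ⟨l, hl⟩ := Submodule.mem_span_singleton.mp hx
  obtain ⟨k, hk⟩ := Submodule.mem_span_singleton.mp hz
  have coeffs_eq_zero : ![C l, C k] = (0 : Fin 2 → PL) :=
    Matrix.eq_zero_of_mulVec_eq_zero hq (prolongMatrix_mulVec_eq_zero hl.symm hk.symm)
  have hl₀ : l = 0 := by simpa using congrFun coeffs_eq_zero 0
  have hk₀ : k = 0 := by simpa using congrFun coeffs_eq_zero 1
  exact eq_zero_of_lagr_X_eq_zero (by rw [← hl, hl₀, zero_smul]) (by rw [← hk, hk₀, zero_smul]) hu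

/-- For `α ≥ 0` and `h₀ = ℝ·(x² + z² + α(2y − xz)) ⊆ L₀`, the first
prolongation of `h₀` vanishes: `{u ∈ L₁ : {u,x} ∈ h₀ and {u,z} ∈ h₀} = {0}`. -/
theorem stmt13 (α : ℝ) (hα : 0 ≤ α) :
    ∀ u ∈ L1span,
      lagr u (X 0) ∈ Submodule.span ℝ
        ({X 0 ^ 2 + X 2 ^ 2 + C α * (2 * X 1 - X 0 * X 2)} : Set PL) →
      lagr u (X 2) ∈ Submodule.span ℝ
        ({X 0 ^ 2 + X 2 ^ 2 + C α * (2 * X 1 - X 0 * X 2)} : Set PL) →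
      u = 0 := by
  intro u hu hx hz
  exact stmt13_general (det_prolongMatrix_generator_ne_zero α)
    (constantCoeff_eq_zero_of_mem_L1span hu) hx hz
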